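/- Let P ∈ ℝ^{d×n} be a matrix whose columns are ℚ-linearly independent, let ψ_p : ℝ^n → ℂ be continuous and 2π-periodic in each coordinate, let k ∈ ℤ^n and set λ = Pk ∈ ℝ^d. Then the Fourier–Bohr coefficient of the quasiperiodic function ψ(x) = ψ_p(Pᵀx) at frequency λ equals the k-th Fourier coefficient of its parent function: lim_{T→∞} (2T)^{-d} ∫_{K_T} ψ_p(Pᵀx) e^{−iλ·x} dx = (2π)^{-n} ∫_{[0,2π]^n} ψ_p(y) e^{−ik·y} dy. -/

import Mathlib

open MeasureTheory Filter
open scoped Real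

/-- Average over the box `[a,b]^d`. -/
noncomputable def bavg (d : ℕ) (a b : ℝ) (F : (Fin d → ℝ) → ℂ) : ℂ :=
  (((b - a) ^ d)⁻¹ : ℝ) • ∫ x in Set.Icc (fun _ : Fin d => a) (fun _ => b), F x

lemma bavg_norm_le (d : ℕ) (a b : ℝ) (hab : a < b) (F : (Fin d → ℝ) → ℂ) (C : ℝ)
    (hF : ∀ x, ‖F x‖ ≤ C) : ‖bavg d a b F‖ ≤ C := by
  have hv : (volume (Set.Icc (fun _ : Fin d => a) (fun _ => b))).toReal = (b - a) ^ d := by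
    rw [Real.volume_Icc_pi_toReal (fun _ => hab.le)]
    simp
  have hpos : 0 < (b - a) ^ d := pow_pos (sub_pos.2 hab) d
  have h := norm_setIntegral_le_of_norm_le_const (μ := volume)
    (s := Set.Icc (fun _ : Fin d => a) (fun _ => b)) (f := F) (C := C)
    isCompact_Icc.measure_lt_top (fun x _ => hF x)
  rw [Measure.real, hv] at h
  unfold bavg
  rw [norm_smul, Real.norm_of_nonneg (inv_nonneg.2 hpos.le)]
  calc _ ≤ ((b - a) ^ d)⁻¹ * (C * (b - a) ^ d) := by gcongr
    _ = C := by field_simp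

lemma bavg_add (d : ℕ) (a b : ℝ) (F G : (Fin d → ℝ) → ℂ) (hF : Continuous F)
    (hG : Continuous G) : bavg d a b (fun x => F x + G x) = bavg d a b F + bavg d a b G := by
  unfold bavg
  rw [integral_add (hF.continuousOn.integrableOn_compact isCompact_Icc)
    (hG.continuousOn.integrableOn_compact isCompact_Icc), smul_add]

lemma bavg_smul (d : ℕ) (a b : ℝ) (c : ℂ) (F : (Fin d → ℝ) → ℂ) :
    bavg d a b (fun x => c * F x) = c * bavg d a b F := by
  unfold bavg
  rw [integral_const_mul, mul_smul_comm]

lemma bavg_prod (d : ℕ) (a b : ℝ) (hab : a ≤ b) (f : Fin d → ℝ → ℂ) :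
    bavg d a b (fun x => ∏ i, f i (x i)) =
      ∏ i, (((b - a)⁻¹ : ℝ) • ∫ x in a..b, f i x) := by
  unfold bavg
  have h : (volume : Measure (Fin d → ℝ)).restrict (Set.Icc (fun _ : Fin d => a) (fun _ => b))
      = Measure.pi (fun _ => (volume : Measure ℝ).restrict (Set.Icc a b)) := by
    rw [← Set.pi_univ_Icc, volume_pi, Measure.restrict_pi_pi]
  rw [h, integral_fintype_prod_eq_prod]
  simp only [intervalIntegral.integral_of_le hab, integral_Icc_eq_integral_Ioc]
  simp [Complex.real_smul, Finset.prod_mul_distrib]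

lemma avg_exp_tendsto (μ : ℝ) :
    Tendsto (fun T : ℝ => (((T - -T)⁻¹ : ℝ) • ∫ x in (-T)..T, Complex.exp (Complex.I * μ * x)))
      atTop (nhds (if μ = 0 then 1 else 0)) := by
  split_ifs with h
  · refine tendsto_const_nhds.congr' ?_
    filter_upwards [eventually_gt_atTop 0] with T hT
    have : (T:ℂ) + T ≠ 0 := by
      rw [← two_mul]; exact mul_ne_zero two_ne_zero (by exact_mod_cast hT.ne')
    simp [h]
    rw [← mul_add, inv_mul_cancel₀ this]
  · have hc : Complex.I * (μ : ℂ) ≠ 0 := mul_ne_zero Complex.I_ne_zero (by exact_mod_cast h)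
    have hn : ∀ t : ℝ, ‖Complex.exp (Complex.I * μ * t)‖ = 1 := fun t => by
      have : Complex.I * μ * t = ((μ * t : ℝ) : ℂ) * Complex.I := by push_cast; ring
      rw [this, Complex.norm_exp_ofReal_mul_I]
    have hb : Tendsto (fun T : ℝ => (T - -T)⁻¹ * (2 / ‖Complex.I * (μ : ℂ)‖)) atTop (nhds 0) := by
      have : Tendsto (fun T : ℝ => (T - -T)⁻¹) atTop (nhds 0) := by
        refine tendsto_inv_atTop_zero.comp ?_
        simp only [sub_neg_eq_add]
        exact tendsto_id.atTop_add_atTop tendsto_id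
      simpa using this.mul_const (2 / ‖Complex.I * (μ : ℂ)‖)
    refine squeeze_zero_norm' ?_ hb
    filter_upwards [eventually_gt_atTop 0] with T hT
    rw [integral_exp_mul_complex hc, norm_smul, norm_div,
      Real.norm_of_nonneg (inv_nonneg.2 (by linarith))]
    gcongr
    · exact inv_nonneg.2 (by linarith)
    · refine (norm_sub_le _ _).trans ?_
      rw [hn, hn]; norm_num

lemma avg_exp_period (m : ℤ) :
    (((2 * π - 0)⁻¹ : ℝ) • ∫ x in (0:ℝ)..(2 * π), Complex.exp (Complex.I * ((m : ℝ) : ℂ) * x))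
      = (if m = 0 then 1 else 0) := by
  split_ifs with h
  · have : (π : ℂ) ≠ 0 := by exact_mod_cast Real.pi_ne_zero
    simp [h]
    field_simp
  · have hc : Complex.I * ((m : ℝ) : ℂ) ≠ 0 :=
      mul_ne_zero Complex.I_ne_zero (by exact_mod_cast h)
    rw [integral_exp_mul_complex hc]
    have : Complex.I * ((m : ℝ) : ℂ) * ((2 * π : ℝ) : ℂ) = m * (2 * π * Complex.I) := by
      push_cast; ring
    rw [this, Complex.exp_int_mul_two_pi_mul_I]
    simp

/-- The covering map with period `2π`. -/
noncomputable def tq (n : ℕ) (y : Fin n → ℝ) : UnitAddTorus (Fin n) :=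
  fun j => ((y j / (2 * π) : ℝ) : UnitAddCircle)

lemma tq_continuous (n : ℕ) : Continuous (tq n) := by
  unfold tq
  refine continuous_pi fun j => ?_
  exact (AddCircle.continuous_mk' 1).comp (by fun_prop)

lemma tq_quot (n : ℕ) : Topology.IsQuotientMap (tq n) := by
  have h1 : IsOpenQuotientMap (fun (y : Fin n → ℝ) (j : Fin n) => ((y j : ℝ) : UnitAddCircle)) :=
    IsOpenQuotientMap.piMap (fun _ => QuotientAddGroup.isOpenQuotientMap_mk)
  have h2 : Function.Surjective (fun (y : Fin n → ℝ) (j : Fin n) => y j / (2 * π)) := by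
    intro z
    refine ⟨fun j => z j * (2 * π), ?_⟩
    funext j
    have := Real.pi_ne_zero
    field_simp
  let e : (Fin n → ℝ) ≃ₜ (Fin n → ℝ) :=
    { toFun := fun y j => y j / (2 * π)
      invFun := fun y j => y j * (2 * π)
      left_inv := fun y => by funext j; have := Real.pi_ne_zero; field_simp
      right_inv := fun y => by funext j; have := Real.pi_ne_zero; field_simp
      continuous_toFun := by fun_prop
      continuous_invFun := by fun_prop }
  exact h1.isQuotientMap.comp e.isQuotientMap

lemma mFourier_tq (n : ℕ) (m : Fin n → ℤ) (y : Fin n → ℝ) :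
    UnitAddTorus.mFourier m (tq n y) = ∏ j, Complex.exp (Complex.I * ((m j : ℝ) : ℂ) * y j) := by
  simp only [UnitAddTorus.mFourier, ContinuousMap.coe_mk, tq]
  refine Finset.prod_congr rfl fun j _ => ?_
  rw [fourier_coe_apply]
  congr 1
  have : (π : ℂ) ≠ 0 := by exact_mod_cast Real.pi_ne_zero
  push_cast
  field_simp

lemma per_int (n : ℕ) (F : (Fin n → ℝ) → ℂ)
    (hper : ∀ (y : Fin n → ℝ) (j : Fin n), F (fun i => y i + if i = j then 2 * π else 0) = F y)
    (y : Fin n → ℝ) (z : Fin n → ℤ) : F (fun i => y i + z i * (2 * π)) = F y := by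
  have h1 : ∀ (j : Fin n) (c : ℕ) (y : Fin n → ℝ),
      F (fun i => y i + if i = j then c * (2 * π) else 0) = F y := by
    intro j c
    induction c with
    | zero => intro y; simp
    | succ c ih =>
      intro y
      rw [← ih y, ← hper (fun i => y i + if i = j then (c : ℝ) * (2 * π) else 0) j]
      congr 1; funext i
      split_ifs
      · push_cast; ring
      · ring
  have h2 : ∀ (j : Fin n) (c : ℤ) (y : Fin n → ℝ),
      F (fun i => y i + if i = j then c * (2 * π) else 0) = F y := by
    intro j c y
    obtain ⟨a, rfl | rfl⟩ := c.eq_nat_or_neg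
    · exact_mod_cast h1 j a y
    · rw [← h1 j a]
      congr 1; funext i
      split_ifs
      · push_cast; ring
      · ring
  have h3 : ∀ (s : Finset (Fin n)), F (fun i => y i + if i ∈ s then z i * (2 * π) else 0) = F y := by
    intro s
    induction s using Finset.induction_on with
    | empty => simp
    | insert j s hj ih =>
      rw [← ih, ← h2 j (z j) (fun i => y i + if i ∈ s then (z i : ℝ) * (2 * π) else 0)]
      congr 1; funext i
      by_cases hij : i = j
      · subst hij; simp [hj]
      · simp [hij]
  simpa using h3 Finset.univ

lemma descend (n : ℕ) (F : (Fin n → ℝ) → ℂ) (hF : Continuous F)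
    (hper : ∀ (y : Fin n → ℝ) (j : Fin n), F (fun i => y i + if i = j then 2 * π else 0) = F y) :
    ∃ g : C(UnitAddTorus (Fin n), ℂ), ∀ y, g (tq n y) = F y := by
  have hs := (tq_quot n).surjective
  have key : ∀ y, F (Function.surjInv hs (tq n y)) = F y := by
    intro y
    set w := Function.surjInv hs (tq n y) with hw
    have h : tq n w = tq n y := Function.surjInv_eq hs _
    have : ∀ j, ∃ c : ℤ, w j = y j + c * (2 * π) := by
      intro j
      have hj := congrFun h j
      simp only [tq] at hj
      rw [← sub_eq_zero, ← AddCircle.coe_sub, AddCircle.coe_eq_zero_iff] at hj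
      obtain ⟨c, hc⟩ := hj
      refine ⟨c, ?_⟩
      have := Real.pi_ne_zero
      simp only [zsmul_eq_mul, mul_one] at hc
      rw [hc]
      field_simp
      ring
    choose z hz using this
    rw [← per_int n F hper y z]
    congr 1; funext i; exact hz i
  refine ⟨⟨fun t => F (Function.surjInv hs t), ?_⟩, key⟩
  rw [(tq_quot n).continuous_iff]
  convert hF using 1
  funext y; exact key y

/-- The pull-back linear map. -/
def lmap (d n : ℕ) (P : Matrix (Fin d) (Fin n) ℝ) (x : Fin d → ℝ) : Fin n → ℝ :=
  fun j => ∑ i, P i j * x i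

lemma lmap_continuous (d n : ℕ) (P : Matrix (Fin d) (Fin n) ℝ) : Continuous (lmap d n P) := by
  unfold lmap; fun_prop

lemma mono_case (d n : ℕ) (P : Matrix (Fin d) (Fin n) ℝ)
    (hP : LinearIndependent ℚ (fun j : Fin n => fun i : Fin d => P i j)) (m : Fin n → ℤ) :
    Tendsto (fun T : ℝ => bavg d (-T) T (fun x => UnitAddTorus.mFourier m (tq n (lmap d n P x))))
      atTop (nhds (bavg n 0 (2 * π) (fun y => UnitAddTorus.mFourier m (tq n y)))) := by
  have e1 : ∀ x, UnitAddTorus.mFourier m (tq n (lmap d n P x)) =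
      ∏ i, Complex.exp (Complex.I * ((∑ j, P i j * m j : ℝ) : ℂ) * x i) := by
    intro x
    rw [mFourier_tq, ← Complex.exp_sum, ← Complex.exp_sum]
    congr 1
    simp only [lmap]
    push_cast
    simp only [Finset.mul_sum, Finset.sum_mul]
    rw [Finset.sum_comm]
    refine Finset.sum_congr rfl fun _ _ => Finset.sum_congr rfl fun _ _ => ?_
    ring
  have hiff : (∀ i, (∑ j, P i j * (m j : ℝ)) = 0) ↔ ∀ j, m j = 0 := by
    constructor
    · intro h j
      have := Fintype.linearIndependent_iff.1 hP (fun j => (m j : ℚ)) (by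
        funext i
        rw [Finset.sum_apply]
        simp only [Pi.smul_apply, Pi.zero_apply, Rat.smul_def]
        rw [← h i]
        refine Finset.sum_congr rfl fun j _ => ?_
        push_cast; ring) j
      exact_mod_cast this
    · intro h i; simp [h]
  have e2 : bavg n 0 (2 * π) (fun y => UnitAddTorus.mFourier m (tq n y)) =
      ∏ i, (if (∑ j, P i j * (m j : ℝ)) = 0 then (1:ℂ) else 0) := by
    simp only [mFourier_tq]
    rw [bavg_prod n 0 (2 * π) Real.two_pi_pos.le
      (fun j t => Complex.exp (Complex.I * ((m j : ℝ) : ℂ) * t))]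
    simp only [avg_exp_period]
    rw [Finset.prod_ite_zero, Finset.prod_ite_zero]
    simp [hiff]
  rw [e2]
  refine (tendsto_finset_prod Finset.univ fun i _ =>
    avg_exp_tendsto (∑ j, P i j * (m j : ℝ))).congr' ?_
  filter_upwards [eventually_gt_atTop 0] with T hT
  simp only [e1]
  rw [bavg_prod d (-T) T (by linarith)
    (fun i t => Complex.exp (Complex.I * ((∑ j, P i j * (m j : ℝ) : ℝ) : ℂ) * t))]

lemma all_case (d n : ℕ) (P : Matrix (Fin d) (Fin n) ℝ)
    (hP : LinearIndependent ℚ (fun j : Fin n => fun i : Fin d => P i j))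
    (g : C(UnitAddTorus (Fin n), ℂ)) :
    Tendsto (fun T : ℝ => bavg d (-T) T (fun x => g (tq n (lmap d n P x))))
      atTop (nhds (bavg n 0 (2 * π) (fun y => g (tq n y)))) := by
  have c1 : ∀ g : C(UnitAddTorus (Fin n), ℂ), Continuous fun x => g (tq n (lmap d n P x)) :=
    fun g => g.continuous.comp ((tq_continuous n).comp (lmap_continuous d n P))
  have c2 : ∀ g : C(UnitAddTorus (Fin n), ℂ), Continuous fun x => g (tq n x) :=
    fun g => g.continuous.comp (tq_continuous n)
  have hspan : ∀ g ∈ Submodule.span ℂ (Set.range (UnitAddTorus.mFourier (d := Fin n))),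
      Tendsto (fun T : ℝ => bavg d (-T) T (fun x => g (tq n (lmap d n P x))))
      atTop (nhds (bavg n 0 (2 * π) (fun y => g (tq n y)))) := by
    intro g hg
    induction hg using Submodule.span_induction with
    | mem g hg => obtain ⟨m, rfl⟩ := hg; exact mono_case d n P hP m
    | zero => simp [bavg]
    | add g h _ _ ig ih =>
      simp only [ContinuousMap.add_apply]
      rw [bavg_add _ _ _ _ _ (c2 g) (c2 h)]
      exact (ig.add ih).congr fun T => (bavg_add _ _ _ _ _ (c1 g) (c1 h)).symm
    | smul c g _ ig =>
      simp only [ContinuousMap.smul_apply, smul_eq_mul, bavg_smul]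
      exact ig.const_mul c
  have hcl : g ∈ closure
      (Submodule.span ℂ (Set.range (UnitAddTorus.mFourier (d := Fin n))) : Set _) := by
    rw [← Submodule.topologicalClosure_coe, UnitAddTorus.span_mFourier_closure_eq_top]
    trivial
  rw [Metric.tendsto_nhds]
  intro ε hε
  obtain ⟨h, hh, hd⟩ := Metric.mem_closure_iff.1 hcl (ε / 3) (by positivity)
  have hb : ∀ t, ‖(g - h) t‖ ≤ ε / 3 := fun t =>
    ((g - h).norm_coe_le_norm t).trans (by rw [← dist_eq_norm]; exact hd.le)
  have eg : ∀ t, g t = h t + (g - h) t := fun t => by simp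
  filter_upwards [(Metric.tendsto_nhds.1 (hspan h hh)) (ε / 3) (by positivity),
    eventually_gt_atTop 0] with T h1 hT
  have b1 := bavg_norm_le d (-T) T (by linarith) (fun x => (g - h) (tq n (lmap d n P x))) (ε / 3)
    (fun x => hb _)
  have b2 := bavg_norm_le n 0 (2 * π) Real.two_pi_pos (fun x => (g - h) (tq n x)) (ε / 3)
    (fun x => hb _)
  have s1 := bavg_add d (-T) T _ _ (c1 h) (c1 (g - h))
  have s2 := bavg_add n 0 (2 * π) _ _ (c2 h) (c2 (g - h))
  simp only [← eg] at s1 s2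
  rw [s1, s2]
  rw [dist_eq_norm] at h1 ⊢
  rw [add_sub_add_comm]
  have := norm_add_le (bavg d (-T) T (fun x => h (tq n (lmap d n P x))) -
    bavg n 0 (2 * π) (fun y => h (tq n y)))
    (bavg d (-T) T (fun x => (g - h) (tq n (lmap d n P x))) -
      bavg n 0 (2 * π) (fun x => (g - h) (tq n x)))
  have := norm_sub_le (bavg d (-T) T (fun x => (g - h) (tq n (lmap d n P x))))
      (bavg n 0 (2 * π) (fun x => (g - h) (tq n x)))
  linarith

/-- The Fourier–Bohr coefficient of the quasiperiodic function `ψ(x) = ψ_p(Pᵀx)`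
at frequency `λ = Pk` equals the `k`-th Fourier coefficient of the parent
function `ψ_p`. -/
theorem fourierBohr_eq_parent_fourierCoeff
    (d n : ℕ) (hd : 0 < d) (hn : 0 < n)
    (P : Matrix (Fin d) (Fin n) ℝ)
    (hP : LinearIndependent ℚ (fun j : Fin n => fun i : Fin d => P i j))
    (ψp : (Fin n → ℝ) → ℂ) (hcont : Continuous ψp)
    (hper : ∀ (y : Fin n → ℝ) (j : Fin n),
      ψp (fun i => y i + if i = j then 2 * π else 0) = ψp y)
    (k : Fin n → ℤ) :
    Tendsto
      (fun T : ℝ => (((2 * T) ^ d)⁻¹ : ℝ) •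
        ∫ x in {x : Fin d → ℝ | ∀ j, |x j| ≤ T},
          ψp (fun j => ∑ i, P i j * x i) *
            Complex.exp (-Complex.I * ((∑ i, (∑ j, P i j * (k j : ℝ)) * x i : ℝ) : ℂ)))
      atTop
      (nhds ((((2 * π) ^ n)⁻¹ : ℝ) •
        ∫ y in Set.Icc (0 : Fin n → ℝ) (fun _ => 2 * π),
          ψp y * Complex.exp (-Complex.I * ((∑ j, (k j : ℝ) * y j : ℝ) : ℂ)))) := by
  obtain ⟨g, hg⟩ := descend n
    (fun y => ψp y * Complex.exp (-Complex.I * ((∑ j, (k j : ℝ) * y j : ℝ) : ℂ)))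
    (hcont.mul (by fun_prop)) (by
      intro y j
      rw [hper]
      congr 1
      rw [Complex.exp_eq_exp_iff_exists_int]
      refine ⟨-k j, ?_⟩
      have : ∑ i, (k i : ℝ) * (y i + if i = j then 2 * π else 0) =
          ∑ i, (k i : ℝ) * y i + k j * (2 * π) := by
        simp [mul_add, Finset.sum_add_distrib]
      rw [this]
      push_cast
      ring)
  have h := all_case d n P hP g
  simp only [hg] at h
  unfold bavg at h
  simp only [sub_zero] at h
  refine h.congr fun T => ?_
  have hset : {x : Fin d → ℝ | ∀ j, |x j| ≤ T} = Set.Icc (fun _ => -T) (fun _ => T) := by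
    ext x
    simp only [Set.mem_setOf_eq, Set.mem_Icc, Pi.le_def, abs_le, forall_and]
  have h2 : T - -T = 2 * T := by ring
  rw [hset, h2]
  congr 2
  funext x
  have : ∑ j, (k j : ℝ) * lmap d n P x j = ∑ i, (∑ j, P i j * (k j : ℝ)) * x i := by
    simp only [lmap, Finset.mul_sum, Finset.sum_mul]
    rw [Finset.sum_comm]
    refine Finset.sum_congr rfl fun _ _ => Finset.sum_congr rfl fun _ _ => ?_
    ring
  rw [this]
  rfl
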